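/- arXiv:2501.19193 — 3 statements merged into one kernel-verified Lean document; each statement's English description precedes it below -/
import Mathlib

section
/- Let n ∈ ℝ_{>0}, let Λ ⊂ ℤ² be a reduced sublattice, and let p ∈ H_n with p_y ∉ (1,2) and Nextpt(p) ≠ ∞. Then the x-coordinate of Minsl(p) is at most 2n + 2·det Λ. -/
/-!
Write `Minsl(p) = (a, -b)`. Every ray from a point of `H_n` in a direction with nonnegative
coordinates stays in `H_n`, so `Nextpt(p) ≠ ∞` makes `b` a positive integer. Moreover `b < p_y`
because `H_n` does not meet the `x`-axis, and then `p_y ∉ (1, 2)` forces `p_y ≥ 2`.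

Hence `c = max 1 (b - 1)` satisfies `p_y - c ≥ 1` and `b ≤ 2 c`. By reducedness `Λ` has a point at
height `-c`, and translating it by multiples of `(D, 0) ∈ Λ`, where `D = det Λ`, gives one,
`(x, -c)`, with `n ≤ x < n + D`. Since `p + (x, -c)` dominates `(n, 1)`, it lies in `H_n`, and
minimality of the slope of `(a, -b)` yields `a c ≤ b x ≤ 2 c x`, so `a ≤ 2 x < 2 n + 2 D`.
-/

noncomputable section

/-- The closed region on and above the positive branch of the hyperbola `x*y = n`. -/
def Hset (n : ℝ) : Set (ℝ × ℝ) := {q | 0 ≤ q.1 ∧ 0 ≤ q.2 ∧ n ≤ q.1 * q.2}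

/-- The integer lattice `ℤ² ⊂ ℝ²`. -/
def intLattice : Set (ℝ × ℝ) := {q | ∃ a b : ℤ, q = ((a : ℝ), (b : ℝ))}

/-- The lattice generated by two vectors `v, w`. -/
def latticeOf (v w : ℝ × ℝ) : Set (ℝ × ℝ) :=
  {q | ∃ a b : ℤ, q = (a : ℝ) • v + (b : ℝ) • w}

/-- The covolume (absolute determinant) of the lattice with basis `v, w`;
for a sublattice of `ℤ²` this is its index. -/
def detOf (v w : ℝ × ℝ) : ℝ := |v.1 * w.2 - v.2 * w.1|

/-- A sublattice `Λ ⊆ ℤ²` is reduced if both coordinate projections of `Λ` equal `ℤ`. -/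
def IsReducedLattice (Λ : Set (ℝ × ℝ)) : Prop :=
  Prod.fst '' Λ = Set.range (fun a : ℤ => (a : ℝ)) ∧
  Prod.snd '' Λ = Set.range (fun a : ℤ => (a : ℝ))

/-- Slope comparison for vectors with nonnegative `x`-coordinate (where vertical
vectors pointing down have slope `-∞` and vertical vectors pointing up `+∞`):
`slope u ≤ slope v` iff `u_y v_x ≤ v_y u_x`. -/
def slopeLE (u v : ℝ × ℝ) : Prop := u.2 * v.1 ≤ v.2 * u.1

/-- `ms = Minsl(p)`: the primitive nonzero vector of smallest slope in
`(H_n ∩ (p+Λ) - p) ∩ {x ≥ 0} ⊆ Λ`. -/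
def IsMinsl (n : ℝ) (Λ : Set (ℝ × ℝ)) (p ms : ℝ × ℝ) : Prop :=
  ms ∈ Λ ∧ ms ≠ 0 ∧ 0 ≤ ms.1 ∧ p + ms ∈ Hset n ∧
  (∀ u ∈ Λ, ∀ k : ℤ, 2 ≤ k → ms ≠ (k : ℝ) • u) ∧
  ∀ u ∈ Λ, u ≠ 0 → 0 ≤ u.1 → p + u ∈ Hset n → slopeLE ms u

section Hset

variable {n : ℝ} {p q u : ℝ × ℝ}

lemma isUpperSet_Hset (n : ℝ) : IsUpperSet (Hset n) := by
  rintro q r ⟨hfst, hsnd⟩ ⟨hq₁, hq₂, hq⟩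
  exact ⟨hq₁.trans hfst, hq₂.trans hsnd, hq.trans (mul_le_mul hfst hsnd hq₂ (hq₁.trans hfst))⟩

lemma snd_pos_of_mem_Hset (hn : 0 < n) (hq : q ∈ Hset n) : 0 < q.2 :=
  pos_of_mul_pos_right (hn.trans_le hq.2.2) hq.1

lemma mem_Hset_of_le_fst_of_one_le_snd (hn : 0 ≤ n) (hfst : n ≤ q.1) (hsnd : 1 ≤ q.2) :
    q ∈ Hset n :=
  isUpperSet_Hset n (a := (n, 1)) ⟨hfst, hsnd⟩ ⟨hn, zero_le_one, (mul_one n).ge⟩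

lemma not_bddAbove_smul_mem_Hset (hp : p ∈ Hset n) (hu : 0 ≤ u) :
    ¬ BddAbove {j : ℤ | p + (j : ℝ) • u ∈ Hset n} := by
  have hray : Set.Ici 0 ⊆ {j : ℤ | p + (j : ℝ) • u ∈ Hset n} := fun j hj =>
    isUpperSet_Hset n (le_add_of_nonneg_right (smul_nonneg (Int.cast_nonneg hj) hu)) hp
  exact fun hbdd => not_bddAbove_Ici 0 (hbdd.mono hray)

end Hset

namespace IsMinsl

variable {n : ℝ} {Λ : Set (ℝ × ℝ)} {p ms u : ℝ × ℝ}

lemma slopeLE_of_fst_pos (hms : IsMinsl n Λ p ms) (hu : u ∈ Λ) (hpos : 0 < u.1)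
    (hmem : p + u ∈ Hset n) : slopeLE ms u := by
  obtain ⟨-, -, -, -, -, hmin⟩ := hms
  exact hmin u hu (fun h => hpos.ne' (congrArg Prod.fst h)) hpos.le hmem

lemma snd_neg (hms : IsMinsl n Λ p ms) (hp : p ∈ Hset n)
    (hbdd : BddAbove {j : ℤ | p + (j : ℝ) • ms ∈ Hset n}) : ms.2 < 0 := by
  by_contra! hsnd
  exact not_bddAbove_smul_mem_Hset hp ⟨hms.2.2.1, hsnd⟩ hbdd

lemma fst_le_mul_of_mul_snd_le (hms : IsMinsl n Λ p ms) (hu : u ∈ Λ) (hfst : 0 < u.1)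
    (hsnd : u.2 < 0) (hmem : p + u ∈ Hset n) {k : ℝ} (hk : k * u.2 ≤ ms.2) :
    ms.1 ≤ k * u.1 := by
  refine (mul_le_mul_left_of_neg hsnd).mp ?_
  calc u.2 * (k * u.1) = k * u.2 * u.1 := by ring
    _ ≤ ms.2 * u.1 := by gcongr
    _ ≤ u.2 * ms.1 := hms.slopeLE_of_fst_pos hu hfst hmem

end IsMinsl

lemma latticeOf_eq_closure (v w : ℝ × ℝ) :
    latticeOf v w = AddSubgroup.closure {v, w} := by
  ext q
  simp only [latticeOf, Set.mem_ofPred_eq, SetLike.mem_coe, AddSubgroup.mem_closure_pair,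
    Int.cast_smul_eq_zsmul, eq_comm]

lemma detOf_zero_mem {L : AddSubgroup (ℝ × ℝ)}
    (hint : Prod.snd '' (L : Set (ℝ × ℝ)) ⊆ Set.range (fun a : ℤ => (a : ℝ))) {v w : ℝ × ℝ}
    (hv : v ∈ L) (hw : w ∈ L) : (detOf v w, (0 : ℝ)) ∈ L := by
  obtain ⟨b, hb⟩ := hint ⟨v, hv, rfl⟩
  obtain ⟨c, hc⟩ := hint ⟨w, hw, rfl⟩
  have helim : (v.1 * w.2 - v.2 * w.1, (0 : ℝ)) = c • v - b • w := by
    ext <;> simp [← hb, ← hc] <;> ring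
  have hmem : (v.1 * w.2 - v.2 * w.1, (0 : ℝ)) ∈ L :=
    helim ▸ L.sub_mem (L.zsmul_mem hv c) (L.zsmul_mem hw b)
  rcases abs_choice (v.1 * w.2 - v.2 * w.1) with h | h
  · rwa [detOf, h]
  · simpa [detOf, h] using L.neg_mem hmem

lemma exists_mem_Ico_prodMk_mem {L : AddSubgroup (ℝ × ℝ)} {d : ℝ} (hd : 0 < d)
    (hdL : (d, 0) ∈ L) {q : ℝ × ℝ} (hq : q ∈ L) (s : ℝ) :
    ∃ x ∈ Set.Ico s (s + d), (x, q.2) ∈ L := by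
  obtain ⟨m, hm, -⟩ := existsUnique_add_zsmul_mem_Ico hd q.1 s
  refine ⟨q.1 + m • d, hm, ?_⟩
  simpa [Prod.add_def] using L.add_mem hq (L.zsmul_mem hdL m)

lemma exists_int_half_le_and_add_one_le {y : ℝ} (hy : y ∉ Set.Ioo 1 2) {b : ℤ} (hb : 1 ≤ b)
    (hby : b < y) : ∃ c : ℤ, 1 ≤ c ∧ b ≤ 2 * c ∧ (c : ℝ) + 1 ≤ y := by
  rcases hb.eq_or_lt with rfl | hb
  · have hy₁ : 1 < y := by simpa using hby
    have hy₂ : 2 ≤ y := not_lt.mp fun h => hy ⟨hy₁, h⟩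
    exact ⟨1, le_rfl, by norm_num, by push_cast; linarith⟩
  · exact ⟨b - 1, by lia, by lia, by simpa using hby.le⟩

theorem statement16_general {n d : ℝ} (hn : 0 < n) (hd : 0 < d) {L : AddSubgroup (ℝ × ℝ)}
    (hdL : (d, 0) ∈ L)
    (hsnd : Prod.snd '' (L : Set (ℝ × ℝ)) = Set.range (fun a : ℤ => (a : ℝ)))
    {p ms : ℝ × ℝ} (hp : p ∈ Hset n) (hpy : p.2 ∉ Set.Ioo (1 : ℝ) 2) (hms : IsMinsl n L p ms)
    (hbdd : BddAbove {j : ℤ | p + (j : ℝ) • ms ∈ Hset n}) :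
    ms.1 < 2 * n + 2 * d := by
  obtain ⟨b, hb : (b : ℝ) = -ms.2⟩ := hsnd.subset ⟨-ms, L.neg_mem hms.1, rfl⟩
  have hb_pos : 0 < b := by
    have : (0 : ℝ) < b := hb ▸ neg_pos.mpr (hms.snd_neg hp hbdd)
    exact_mod_cast this
  have hb_lt : (b : ℝ) < p.2 := by
    have : 0 < p.2 + ms.2 := snd_pos_of_mem_Hset hn hms.2.2.2.1
    linarith
  obtain ⟨c, hc, hbc, hcp⟩ := exists_int_half_le_and_add_one_le hpy hb_pos hb_lt
  obtain ⟨q, hqL, hqc : q.2 = (-c : ℤ)⟩ := hsnd.superset ⟨-c, rfl⟩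
  push_cast at hqc
  obtain ⟨x, ⟨hnx, hxd⟩, hxL⟩ := exists_mem_Ico_prodMk_mem hd hdL hqL n
  rw [hqc] at hxL
  have hx : 0 < x := hn.trans_le hnx
  have hmem : p + (x, -(c : ℝ)) ∈ Hset n :=
    mem_Hset_of_le_fst_of_one_le_snd hn.le (le_add_of_nonneg_of_le hp.1 hnx)
      (show 1 ≤ p.2 + -(c : ℝ) by linarith)
  have hc_pos : (0 : ℝ) < c := by exact_mod_cast hc
  have hbc' : (b : ℝ) ≤ 2 * c := by exact_mod_cast hbc
  have hms_fst : ms.1 ≤ 2 * x :=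
    hms.fst_le_mul_of_mul_snd_le hxL hx (neg_neg_of_pos hc_pos) hmem (by linarith)
  linarith

/-- If `Λ ⊆ ℤ²` is a reduced sublattice, `p ∈ H_n` with `p_y ∉ (1,2)`, and
`Nextpt(p) ≠ ∞` (the maximum of `{j ∈ ℤ : p + j·Minsl(p) ∈ H_n}` exists), then the
`x`-coordinate of `Minsl(p)` is at most `2n + 2 det Λ`. -/
theorem statement16 (n : ℝ) (hn : 0 < n) (v w : ℝ × ℝ)
    (hvw : v.1 * w.2 - v.2 * w.1 ≠ 0)
    (hsub : latticeOf v w ⊆ intLattice)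
    (hred : IsReducedLattice (latticeOf v w))
    (p : ℝ × ℝ) (hp : p ∈ Hset n) (hpy : p.2 ∉ Set.Ioo (1 : ℝ) 2)
    (ms : ℝ × ℝ) (hms : IsMinsl n (latticeOf v w) p ms)
    (kmax : ℤ)
    (hkmax : IsGreatest {j : ℤ | p + (j : ℝ) • ms ∈ Hset n} kmax) :
    ms.1 ≤ 2 * n + 2 * detOf v w := by
  rw [latticeOf_eq_closure] at hms hred
  exact (statement16_general hn (abs_pos.mpr hvw) (detOf_zero_mem hred.2.subset
    (AddSubgroup.subset_closure (.inl rfl)) (AddSubgroup.subset_closure (.inr rfl)))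
    hred.2 hp hpy hms hkmax.bddAbove).le

end
end

section
/- Let X ⊂ ℝ² be a convex set, Λ ⊂ ℝ² a lattice, and P a closed half-plane whose boundary is a lattice line ℓ of Λ. Let ℓ' be the lattice line of Λ parallel to ℓ, adjacent to ℓ, and on the side of ℓ opposite to P. If X ∩ ℓ' = ∅ and X ∩ ℓ contains at least two points, then X ∩ Λ ⊆ P. -/
noncomputable section

section

variable {𝕜 E : Type*} [Field 𝕜] [LinearOrder 𝕜] [IsStrictOrderedRing 𝕜]
  [AddCommGroup E] [Module 𝕜 E] {X Λ : Set E} {f : E →ₗ[𝕜] 𝕜} {c c' : 𝕜}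

theorem forall_map_lt_of_convex_of_forall_map_ne (hX : Convex 𝕜 X)
    (hne : ∀ x ∈ X, f x ≠ c') (hle : ∃ x ∈ X, f x ≤ c') : ∀ y ∈ X, f y < c' := by
  obtain ⟨x, hx, hxc⟩ := hle
  intro y hy
  by_contra! hcy
  have himage : (f '' X).OrdConnected := (hX.linear_image f).ordConnected
  obtain ⟨z, hz, hzc⟩ : c' ∈ f '' X :=
    himage.out (Set.mem_image_of_mem f hx) (Set.mem_image_of_mem f hy) ⟨hxc, hcy⟩
  exact hne z hz hzc

theorem statement17_general (hX : Convex 𝕜 X) (hadj : ∀ q ∈ Λ, f q ≤ c ∨ c' ≤ f q)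
    (hne : ∀ x ∈ X, f x ≠ c') (hle : ∃ x ∈ X, f x ≤ c') :
    ∀ q ∈ X ∩ Λ, f q ≤ c := by
  rintro q ⟨hqX, hqΛ⟩
  have hlt : f q < c' := forall_map_lt_of_convex_of_forall_map_ne hX hne hle q hqX
  exact (hadj q hqΛ).resolve_right hlt.not_ge

end

/-- Let `X ⊆ ℝ²` be convex and `Λ` a lattice.  Let `ℓ = {f = c}` and `ℓ' = {f = c'}`,
`c < c'`, be parallel lattice lines of `Λ` (each containing at least two lattice
points) that are adjacent (no point of `Λ` has `f`-value strictly between `c` and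
`c'`), and let `P = {f ≤ c}` be the closed half-plane bounded by `ℓ` on the side
opposite to `ℓ'`.  If `X ∩ ℓ' = ∅` and `X ∩ ℓ` contains at least two points, then
`X ∩ Λ ⊆ P`. -/
theorem statement17 (v w : ℝ × ℝ) (hvw : v.1 * w.2 - v.2 * w.1 ≠ 0)
    (X : Set (ℝ × ℝ)) (hX : Convex ℝ X)
    (f : (ℝ × ℝ) →ₗ[ℝ] ℝ) (hf : f ≠ 0)
    (c c' : ℝ) (hcc : c < c')
    (hl : ∃ q₁ ∈ latticeOf v w, ∃ q₂ ∈ latticeOf v w, q₁ ≠ q₂ ∧ f q₁ = c ∧ f q₂ = c)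
    (hl' : ∃ q₁ ∈ latticeOf v w, ∃ q₂ ∈ latticeOf v w, q₁ ≠ q₂ ∧ f q₁ = c' ∧ f q₂ = c')
    (hadj : ∀ q ∈ latticeOf v w, f q ≤ c ∨ c' ≤ f q)
    (hXl' : X ∩ {q | f q = c'} = ∅)
    (hXl : ∃ x₁ ∈ X, ∃ x₂ ∈ X, x₁ ≠ x₂ ∧ f x₁ = c ∧ f x₂ = c) :
    ∀ q ∈ X ∩ latticeOf v w, f q ≤ c := by
  obtain ⟨x, hx, -, -, -, hfx, -⟩ := hXl
  have hne : ∀ y ∈ X, f y ≠ c' := fun y hy hyc =>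
    Set.eq_empty_iff_forall_notMem.mp hXl' y ⟨hy, hyc⟩
  exact statement17_general hX hadj hne ⟨x, hx, hfx.trans_le hcc.le⟩

end
end

section
/- Let n ∈ ℝ_{>0}, let Λ ⊂ ℚ² be a rational lattice, and let p ∈ H_n ∩ conv(H_n ∩ (p+Λ)) be a point lying in the interior of conv(H_n ∩ (p+Λ)). Let e_p be the edge of conv(H_n ∩ (p+Λ)) lying vertically below p, and let v be the right endpoint of e_p (possibly v = ∞ if e_p is an unbounded edge). If q := Nextpt(p) ≠ ∞, then the Euclidean distance from q to the line containing e_p is strictly less than half the Euclidean distance from p to that line, and q_x ≤ v_x. -/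
/-!
Let `C` be the convex hull of `H_n ∩ (p + Λ)`, `b ∈ e` the point of the edge vertically below `p`,
and `k = kmax`. The theorem follows once the ray from `p` in direction `ms = Minsl(p)` is known to
meet `e` in a point `c = p + τ • ms` with `τ > 0`. Indeed `c ∈ C ⊆ H_n`, so convexity of
`H_n` and maximality of `k` give `τ < k + 1`. Moreover `k ≤ τ`, as otherwise `c` would lie strictly
between the interior point `p` and `q ∈ C`, hence in the interior of `C`. Since `1 ≤ k`, this gives
`τ < 2 * k`, and the homothety with centre `c` and ratio `1 - k / τ < 1 / 2` takes `p` to `q` while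
preserving the line spanned by `e`. Finally `q` is not to the right of `c ∈ e`.

For the intersection point: the lattice points come within bounded distance of every point of the
plane, so `C` recedes upwards, and extremality of `e` forces `e` to meet the vertical line through
`p` only in `b`. If `ms` is vertical it points downwards (otherwise `k` would not exist) and
`c = b`. Otherwise `b` is not a lattice point, because `b - p` would have slope `-∞`. As `b` is a
convex combination of lattice points of `e`, some lattice point `s ∈ e` lies to the right of `b`,
with the segment from `b` to `s` contained in `e`. The slope of `ms` is at most that of `s - p`, so
the ray crosses this segment.
-/

noncomputable section

/-- A point of `ℝ²` with rational coordinates. -/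
def ratPoint (q : ℝ × ℝ) : Prop := ∃ a b : ℚ, q = ((a : ℝ), (b : ℝ))

/-- The translate `p + S` of a set `S ⊆ ℝ²`. -/
def translateSet (p : ℝ × ℝ) (S : Set (ℝ × ℝ)) : Set (ℝ × ℝ) := (fun q => p + q) '' S

open AffineMap AffineSpace Filter Topology

section ExtremeSets

variable {𝕜 E : Type*} [Field 𝕜] [LinearOrder 𝕜] [IsStrictOrderedRing 𝕜] [AddCommGroup E]
  [Module 𝕜 E]

theorem lineMap_mem_openSegment_lineMap (x y : E) {a b c : 𝕜} (hab : a < b) (hbc : b < c) :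
    lineMap x y b ∈ openSegment 𝕜 (lineMap x y a) (lineMap x y c) := by
  rw [← image_openSegment, openSegment_eq_Ioo (hab.trans hbc)]
  exact Set.mem_image_of_mem _ ⟨hab, hbc⟩

theorem mem_convexHull_inter_of_isExtreme {S e : Set E}
    (hface : IsExtreme 𝕜 (convexHull 𝕜 S) e) {b : E} (hb : b ∈ e) :
    b ∈ convexHull 𝕜 (S ∩ e) := by
  have hsdiff : convexHull 𝕜 (S \ e) ⊆ convexHull 𝕜 S \ e :=
    convexHull_min (fun x hx => ⟨subset_convexHull 𝕜 S hx.1, hx.2⟩)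
      (hface.convex_sdiff (convex_convexHull 𝕜 S))
  have hbC := hface.subset hb
  rw [← Set.inter_union_sdiff S e] at hbC
  rcases (S ∩ e).eq_empty_or_nonempty with hinter | hinter
  · rw [hinter, Set.empty_union] at hbC
    exact absurd hb (hsdiff hbC).2
  rcases (S \ e).eq_empty_or_nonempty with hdiff | hdiff
  · rwa [hdiff, Set.union_empty] at hbC
  rw [convexHull_union hinter hdiff, mem_convexJoin] at hbC
  obtain ⟨x, hx, y, hy, hbxy⟩ := hbC
  rw [← insert_endpoints_openSegment] at hbxy
  rcases hbxy with rfl | rfl | hbxy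
  · exact hx
  · exact absurd hb (hsdiff hy).2
  · have hxC : x ∈ convexHull 𝕜 S := convexHull_mono Set.inter_subset_left hx
    exact absurd (hface.right_mem_of_mem_openSegment hxC (hsdiff hy).1 hb hbxy) (hsdiff hy).2

theorem segment_subset_of_isExtreme {C e : Set E} (hC : Convex 𝕜 C) (hface : IsExtreme 𝕜 C e)
    {x y z : E} (hx : x ∈ C) (hy : y ∈ C) (hz : z ∈ e) (hzxy : z ∈ openSegment 𝕜 x y) :
    segment 𝕜 x y ⊆ e := by
  intro w hw
  rw [← insert_endpoints_openSegment] at hw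
  rcases hw with rfl | rfl | hw
  · exact hface.left_mem_of_mem_openSegment hx hy hz hzxy
  · exact hface.right_mem_of_mem_openSegment hx hy hz hzxy
  have hwC : w ∈ C := hC.openSegment_subset hx hy hw
  rw [openSegment_eq_image_lineMap] at hzxy hw
  obtain ⟨a, ha, rfl⟩ := hzxy
  obtain ⟨b, hb, rfl⟩ := hw
  rcases lt_trichotomy a b with hab | rfl | hba
  · refine hface.right_mem_of_mem_openSegment hx hwC hz ?_
    simpa only [lineMap_apply_zero] using lineMap_mem_openSegment_lineMap x y ha.1 hab
  · exact hz
  · refine hface.left_mem_of_mem_openSegment hwC hy hz ?_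
    simpa only [lineMap_apply_one] using lineMap_mem_openSegment_lineMap x y hba ha.2

theorem eq_of_isExtreme_of_mem_line {C e : Set E} (hface : IsExtreme 𝕜 C e) {p b : E}
    (hpe : p ∉ e) (hray : ∀ s : 𝕜, s ≤ 0 → lineMap p b s ∈ C) (hb : b ∈ e)
    {x : E} (hx : x ∈ e) (hxline : x ∈ line[𝕜, p, b]) : x = b := by
  obtain ⟨a, rfl⟩ := mem_affineSpan_pair_iff_exists_lineMap_eq.1 hxline
  have hpC : p ∈ C := by simpa using hray 0 le_rfl
  rcases lt_trichotomy a 0 with ha | rfl | ha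
  · refine absurd (hface.right_mem_of_mem_openSegment (hray (a - 1) (by linarith)) hpC hx ?_) hpe
    simpa only [lineMap_apply_zero] using lineMap_mem_openSegment_lineMap p b (sub_one_lt a) ha
  · exact absurd (by simpa using hx) hpe
  rcases lt_trichotomy a 1 with ha₁ | rfl | ha₁
  · refine absurd (hface.left_mem_of_mem_openSegment hpC (hface.subset hb) hx ?_) hpe
    simpa only [lineMap_apply_zero, lineMap_apply_one] using
      lineMap_mem_openSegment_lineMap p b ha ha₁
  · exact lineMap_apply_one p b
  · refine absurd (hface.left_mem_of_mem_openSegment hpC (hface.subset hx) hb ?_) hpe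
    simpa only [lineMap_apply_zero, lineMap_apply_one] using
      lineMap_mem_openSegment_lineMap p b one_pos ha₁

theorem exists_mem_openSegment_of_collinear {T : Set E} (hT : Collinear 𝕜 T) {x : E}
    (hx : x ∈ convexHull 𝕜 T) (hxT : x ∉ T) : ∃ a ∈ T, ∃ b ∈ T, x ∈ openSegment 𝕜 a b := by
  classical
  rw [convexHull_eq_union] at hx
  simp only [Set.mem_iUnion] at hx
  obtain ⟨s, hsT, hs, hxs⟩ := hx
  have hcard : s.card ≤ 2 := by
    have hcol : Collinear 𝕜 (Set.range ((↑) : s → E)) := hT.subset (by rwa [Subtype.range_coe])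
    have := hcol.finiteDimensional_vectorSpan
    simpa only [Fintype.card_coe] using
      hs.card_le_finrank_succ.trans (Nat.succ_le_succ hcol.finrank_le_one)
  interval_cases h : s.card
  · simp [Finset.card_eq_zero.1 h] at hxs
  · obtain ⟨a, rfl⟩ := Finset.card_eq_one.1 h
    simp only [Finset.coe_singleton, convexHull_singleton, Set.mem_singleton_iff,
      Set.singleton_subset_iff] at hxs hsT
    exact absurd (hxs ▸ hsT) hxT
  · obtain ⟨a, b, -, rfl⟩ := Finset.card_eq_two.1 h
    rw [Finset.coe_pair] at hxs hsT
    have ha : a ∈ T := hsT (Set.mem_insert a {b})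
    have hb : b ∈ T := hsT (Set.mem_insert_of_mem a rfl)
    rw [convexHull_pair] at hxs
    exact ⟨a, ha, b, hb, mem_openSegment_of_ne_left_right (ne_of_mem_of_not_mem ha hxT)
      (ne_of_mem_of_not_mem hb hxT) hxs⟩

theorem exists_segment_subset_of_isExtreme {S e : Set E}
    (hface : IsExtreme 𝕜 (convexHull 𝕜 S) e) (he : Collinear 𝕜 e) {b : E} (hb : b ∈ e)
    (hbS : b ∉ S) (f : E →ₗ[𝕜] 𝕜) : ∃ s ∈ S ∩ e, f b ≤ f s ∧ segment 𝕜 b s ⊆ e := by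
  obtain ⟨s₁, hs₁, s₂, hs₂, hbs⟩ := exists_mem_openSegment_of_collinear
    (he.subset Set.inter_subset_right) (mem_convexHull_inter_of_isExtreme hface hb)
    fun h => hbS h.1
  have hbseg : b ∈ segment 𝕜 s₁ s₂ := openSegment_subset_segment 𝕜 s₁ s₂ hbs
  have hsub : segment 𝕜 s₁ s₂ ⊆ e := segment_subset_of_isExtreme (convex_convexHull 𝕜 S) hface
    (subset_convexHull 𝕜 S hs₁.1) (subset_convexHull 𝕜 S hs₂.1) hb hbs
  have hconv : Convex 𝕜 (segment 𝕜 s₁ s₂) := convex_segment s₁ s₂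
  have hmax : f b ≤ max (f s₁) (f s₂) :=
    (f.convexOn convex_univ).le_on_segment (Set.mem_univ s₁) (Set.mem_univ s₂) hbseg
  rcases le_max_iff.1 hmax with hle | hle
  · exact ⟨s₁, hs₁, hle, (hconv.segment_subset hbseg (left_mem_segment 𝕜 s₁ s₂)).trans hsub⟩
  · exact ⟨s₂, hs₂, hle, (hconv.segment_subset hbseg (right_mem_segment 𝕜 s₁ s₂)).trans hsub⟩

end ExtremeSets

theorem notMem_affineSpan_of_collinear {k V P : Type*} [DivisionRing k] [AddCommGroup V]
    [Module k V] [AddTorsor V P] {e : Set P} (he : Collinear k e) {p b : P} (hb : b ∈ e)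
    (hpb : p ≠ b) (hline : ∀ x ∈ e, x ∈ line[k, p, b] → x = b) : p ∉ affineSpan k e := by
  intro hp
  have hcol : Collinear k (insert p e) := (collinear_insert_iff_of_mem_affineSpan hp).2 he
  have heb : e = {b} := Set.eq_singleton_iff_unique_mem.2 ⟨hb, fun x hx => hline x hx <|
    hcol.mem_affineSpan_of_mem_of_ne (Set.mem_insert p e) (Set.mem_insert_of_mem p hb)
      (Set.mem_insert_of_mem p hx) hpb⟩
  rw [heb, AffineSubspace.mem_affineSpan_singleton] at hp
  exact hpb hp

section Interior

variable {E : Type*} [NormedAddCommGroup E] [NormedSpace ℝ E]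

theorem subset_of_isExtreme_of_mem_interior {C e : Set E} (hface : IsExtreme ℝ C e) {x : E}
    (hx : x ∈ e) (hxC : x ∈ interior C) : C ⊆ e := by
  intro y hy
  have hnear : ∀ᶠ s : ℝ in 𝓝[<] 0, lineMap x y s ∈ C := by
    have hcont : Tendsto (fun s : ℝ => lineMap x y s) (𝓝 0) (𝓝 x) :=
      (lineMap_continuous (p := x) (q := y)).tendsto' 0 x (lineMap_apply_zero x y)
    exact (hcont.eventually (mem_interior_iff_mem_nhds.1 hxC)).filter_mono nhdsWithin_le_nhds
  obtain ⟨s, hsC, hs⟩ := (hnear.and self_mem_nhdsWithin).exists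
  refine hface.right_mem_of_mem_openSegment hsC hy hx ?_
  simpa only [lineMap_apply_zero, lineMap_apply_one] using
    lineMap_mem_openSegment_lineMap x y hs one_pos

theorem not_collinear_of_nonempty_interior (hE : 1 < Module.finrank ℝ E) {C : Set E}
    (hC : (interior C).Nonempty) : ¬Collinear ℝ C := by
  intro hcol
  have := Module.finite_of_finrank_pos (zero_lt_one.trans hE)
  have hspan : affineSpan ℝ C = ⊤ :=
    affineSpan_eq_top_of_nonempty_interior (hC.mono (interior_mono (subset_convexHull ℝ C)))
  have hrank := hcol.finrank_le_one
  rw [← direction_affineSpan, hspan, AffineSubspace.direction_top, finrank_top] at hrank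
  exact hE.not_ge hrank

theorem notMem_interior_of_isExtreme_of_collinear (hE : 1 < Module.finrank ℝ E) {C e : Set E}
    (hface : IsExtreme ℝ C e) (he : Collinear ℝ e) {x : E} (hx : x ∈ e) : x ∉ interior C :=
  fun hxC => not_collinear_of_nonempty_interior hE ⟨x, hxC⟩
    (he.subset (subset_of_isExtreme_of_mem_interior hface hx hxC))

theorem le_of_add_smul_notMem_interior {C : Set E} (hC : Convex ℝ C) {p d : E} {k τ : ℝ}
    (hp : p ∈ interior C) (hk : p + k • d ∈ C) (hτ : 0 < τ) (hτC : p + τ • d ∉ interior C) :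
    k ≤ τ := by
  by_contra! hlt
  have hk₀ : 0 < k := hτ.trans hlt
  refine hτC ?_
  have hmem := hC.add_smul_mem_interior (y := -(k • d)) hk (by rwa [add_neg_cancel_right])
    (t := 1 - τ / k) ⟨sub_pos.2 ((div_lt_one hk₀).2 hlt), sub_le_self 1 (by positivity)⟩
  convert hmem using 1
  match_scalars <;> field_simp; ring

end Interior

theorem lt_add_one_of_isGreatest_add_smul_mem {E : Type*} [AddCommGroup E] [Module ℝ E] {K : Set E}
    (hK : Convex ℝ K) {p d : E} (hp : p ∈ K) {k : ℤ}
    (hk : IsGreatest {j : ℤ | p + (j : ℝ) • d ∈ K} k) {τ : ℝ} (hτ : p + τ • d ∈ K) :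
    τ < k + 1 := by
  by_contra! hle
  have hk₀ : (0 : ℝ) ≤ k := by exact_mod_cast hk.2 (show (0 : ℤ) ∈ _ by simpa using hp)
  have hτ₀ : 0 < τ := by linarith
  have hmem : p + ((k + 1 : ℤ) : ℝ) • d ∈ K := by
    have := hK.add_smul_mem hp hτ (t := (k + 1) / τ)
      ⟨by positivity, (div_le_one hτ₀).2 hle⟩
    rwa [smul_smul, div_mul_cancel₀ _ hτ₀.ne', ← Int.cast_one, ← Int.cast_add] at this
  exact (lt_add_one k).not_ge (hk.2 hmem)

theorem infDist_homothety_le {𝕜 V P : Type*} [NormedField 𝕜] [SeminormedAddCommGroup V]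
    [NormedSpace 𝕜 V] [PseudoMetricSpace P] [NormedAddTorsor V P] (A : AffineSubspace 𝕜 P)
    {c : P} (hc : c ∈ A) (r : 𝕜) (p : P) :
    Metric.infDist (homothety c r p) (A : Set P) ≤ ‖r‖ * Metric.infDist p (A : Set P) := by
  have hA : (A : Set P).Nonempty := ⟨c, hc⟩
  rcases eq_or_ne r 0 with rfl | hr
  · simp [Metric.infDist_zero_of_mem (SetLike.mem_coe.2 hc)]
  rw [← div_le_iff₀' (norm_pos_iff.2 hr), Metric.le_infDist hA]
  intro y hy
  rw [div_le_iff₀' (norm_pos_iff.2 hr)]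
  have hyA : homothety c r y ∈ (A : Set P) := A.smul_vsub_vadd_mem r hy hc hc
  calc Metric.infDist (homothety c r p) (A : Set P)
      ≤ dist (homothety c r p) (homothety c r y) := Metric.infDist_le_dist_of_mem hyA
    _ = ‖r‖ * dist p y := by
      simp only [homothety_apply, dist_vadd_cancel_right, dist_smul₀, dist_vsub_cancel_right]

theorem infDist_add_smul_lt_half {E : Type*} [NormedAddCommGroup E] [NormedSpace ℝ E]
    {A : AffineSubspace ℝ E} (hA : IsClosed (A : Set E)) {p d : E} (hp : p ∉ A) {k τ : ℝ}
    (hk : 1 ≤ k) (hkτ : k ≤ τ) (hτ : τ < k + 1) (hc : p + τ • d ∈ A) :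
    Metric.infDist (p + k • d) (A : Set E) < 1 / 2 * Metric.infDist p (A : Set E) := by
  have hτ₀ : 0 < τ := by linarith
  have hpos : 0 < Metric.infDist p (A : Set E) := (hA.notMem_iff_infDist_pos ⟨_, hc⟩).1 hp
  have hhom : p + k • d = homothety (p + τ • d) (1 - k / τ) p := by
    rw [homothety_apply, vsub_eq_sub, vadd_eq_add]
    match_scalars <;> field_simp <;> ring
  have hnonneg : 0 ≤ 1 - k / τ := sub_nonneg.2 ((div_le_one hτ₀).2 hkτ)
  have hratio : 1 - k / τ < 1 / 2 := by
    rw [sub_lt_comm, lt_div_iff₀ hτ₀]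
    linarith
  calc Metric.infDist (p + k • d) (A : Set E)
      ≤ ‖1 - k / τ‖ * Metric.infDist p (A : Set E) := hhom ▸ infDist_homothety_le A hc _ p
    _ = (1 - k / τ) * Metric.infDist p (A : Set E) := by rw [Real.norm_of_nonneg hnonneg]
    _ < 1 / 2 * Metric.infDist p (A : Set E) := by gcongr

section AsymptoticDirections

variable {E : Type*} [NormedAddCommGroup E] [NormedSpace ℝ E]

theorem exists_forall_exists_dist_le_of_span_eq_top [FiniteDimensional ℝ E] {Λ : AddSubgroup E}
    (hΛ : Submodule.span ℝ (Λ : Set E) = ⊤) : ∃ R : ℝ, ∀ x : E, ∃ y ∈ Λ, dist y x ≤ R := by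
  let b := Module.Basis.ofSpan hΛ.ge
  let _ := FiniteDimensional.fintypeBasisIndex b
  refine ⟨∑ i, ‖b i‖, fun x => ⟨ZSpan.floor b x, ?_, ?_⟩⟩
  · have hle : Submodule.span ℤ (Set.range b) ≤ AddSubgroup.toIntSubmodule Λ :=
      Submodule.span_le.2 (Module.Basis.ofSpan_subset hΛ.ge)
    exact hle (ZSpan.floor b x).2
  · rw [dist_comm, dist_eq_norm]
    exact ZSpan.norm_fract_le b x

theorem tendsto_asymptoticNhds_of_dist_le {f : ℝ → E} {v : E} {R : ℝ}
    (hf : ∀ t, dist (f t) (t • v) ≤ R) : Tendsto f atTop (asymptoticNhds ℝ E v) := by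
  have hdir : Tendsto (fun t : ℝ => v + t⁻¹ • (f t - t • v)) atTop (𝓝 v) := by
    have hbdd : IsBoundedUnder (· ≤ ·) atTop (norm ∘ fun t : ℝ => f t - t • v) :=
      isBoundedUnder_of ⟨R, fun t => (dist_eq_norm (f t) (t • v)).symm.trans_le (hf t)⟩
    simpa using (tendsto_inv_atTop_zero.zero_smul_isBoundedUnder_le hbdd).const_add v
  refine (tendsto_id.atTop_smul_nhds_tendsto_asymptoticNhds hdir).congr' ?_
  filter_upwards [eventually_gt_atTop 0] with t ht
  rw [_root_.id, smul_add, smul_inv_smul₀ ht.ne', add_sub_cancel]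

end AsymptoticDirections

section Lattice

/-- The set `latticeOf v w`, bundled as a subgroup of the plane. -/
def latticeSubgroup (v w : ℝ × ℝ) : AddSubgroup (ℝ × ℝ) where
  carrier := latticeOf v w
  zero_mem' := ⟨0, 0, by simp⟩
  add_mem' := by
    rintro _ _ ⟨a, b, rfl⟩ ⟨c, d, rfl⟩
    exact ⟨a + c, b + d, by push_cast; module⟩
  neg_mem' := by
    rintro _ ⟨a, b, rfl⟩
    exact ⟨-a, -b, by push_cast; module⟩

theorem span_eq_top_of_nonempty_interior {Λ : AddSubgroup (ℝ × ℝ)} {p : ℝ × ℝ}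
    (h : (interior (convexHull ℝ (translateSet p Λ))).Nonempty) :
    Submodule.span ℝ (Λ : Set (ℝ × ℝ)) = ⊤ := by
  have hle : affineSpan ℝ (translateSet p Λ) ≤
      AffineSubspace.mk' p (Submodule.span ℝ (Λ : Set (ℝ × ℝ))) := by
    rw [affineSpan_le]
    rintro _ ⟨d, hd, rfl⟩
    simpa [AffineSubspace.mem_mk'] using Submodule.subset_span hd
  rw [affineSpan_eq_top_of_nonempty_interior h, top_le_iff] at hle
  rw [← AffineSubspace.direction_mk' p (Submodule.span ℝ (Λ : Set (ℝ × ℝ))), hle,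
    AffineSubspace.direction_top]

end Lattice

section Hyperbola

variable {n : ℝ}

theorem convex_Hset (n : ℝ) : Convex ℝ (Hset n) := by
  rintro ⟨x₁, y₁⟩ ⟨hx₁, hy₁, h₁⟩ ⟨x₂, y₂⟩ ⟨hx₂, hy₂, h₂⟩ a b ha hb hab
  simp only at hx₁ hy₁ h₁ hx₂ hy₂ h₂
  -- AM-GM: the product of the two mixed terms is at least `n ^ 2`.
  have hmixed : 2 * n ≤ x₁ * y₂ + x₂ * y₁ := by
    by_contra! hlt
    have hmixed₀ : 0 ≤ x₁ * y₂ + x₂ * y₁ := by positivity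
    have hn : 0 ≤ n := by linarith
    have hprod : n * n ≤ (x₁ * y₁) * (x₂ * y₂) := mul_le_mul h₁ h₂ hn (hn.trans h₁)
    nlinarith [sq_nonneg (x₁ * y₂ - x₂ * y₁)]
  refine ⟨add_nonneg (mul_nonneg ha hx₁) (mul_nonneg hb hx₂),
    add_nonneg (mul_nonneg ha hy₁) (mul_nonneg hb hy₂), ?_⟩
  calc n = (a + b) ^ 2 * n := by rw [hab, one_pow, one_mul]
    _ = a * a * n + a * b * (2 * n) + b * b * n := by ring
    _ ≤ a * a * (x₁ * y₁) + a * b * (x₁ * y₂ + x₂ * y₁) + b * b * (x₂ * y₂) := by gcongr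
    _ = (a * x₁ + b * x₂) * (a * y₁ + b * y₂) := by ring

theorem convexHull_inter_subset_Hset (T : Set (ℝ × ℝ)) : convexHull ℝ (Hset n ∩ T) ⊆ Hset n :=
  convexHull_min Set.inter_subset_left (convex_Hset n)

theorem add_mem_Hset {x d : ℝ × ℝ} (hx : x ∈ Hset n) (hd₁ : 0 ≤ d.1) (hd₂ : 0 ≤ d.2) :
    x + d ∈ Hset n := by
  obtain ⟨hx₁, hx₂, hxn⟩ := hx
  exact ⟨add_nonneg hx₁ hd₁, add_nonneg hx₂ hd₂, hxn.trans <|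
    mul_le_mul (le_add_of_nonneg_right hd₁) (le_add_of_nonneg_right hd₂) hx₂
      (add_nonneg hx₁ hd₁)⟩

theorem snd_neg_of_isGreatest_add_smul_mem_Hset {p d : ℝ × ℝ} {k : ℤ}
    (hk : IsGreatest {j : ℤ | p + (j : ℝ) • d ∈ Hset n} k) (hd : 0 ≤ d.1) : d.2 < 0 := by
  by_contra! hd₂
  have hnext : p + ((k + 1 : ℤ) : ℝ) • d ∈ Hset n := by
    convert add_mem_Hset hk.1 hd hd₂ using 1
    push_cast
    module
  exact (lt_add_one k).not_ge (hk.2 hnext)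

theorem up_mem_asymptoticCone {Λ : AddSubgroup (ℝ × ℝ)}
    (hΛ : Submodule.span ℝ (Λ : Set (ℝ × ℝ)) = ⊤) (p : ℝ × ℝ) :
    ((0, 1) : ℝ × ℝ) ∈ asymptoticCone ℝ (Hset n ∩ translateSet p Λ) := by
  obtain ⟨R, hR⟩ := exists_forall_exists_dist_le_of_span_eq_top hΛ
  choose g hgΛ hg using hR
  -- The abscissa `R + 1` keeps these lattice points in the half-plane `1 ≤ x`.
  let f (t : ℝ) : ℝ × ℝ := p + g ((R + 1, t) - p)
  have hR₀ : 0 ≤ R := dist_nonneg.trans (hg 0)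
  have hfdist (t : ℝ) : dist (f t) (R + 1, t) ≤ R := by
    simpa only [f, dist_eq_norm, add_sub_assoc, sub_sub_eq_add_sub, add_comm] using
      hg ((R + 1, t) - p)
  have hftendsto : Tendsto f atTop (asymptoticNhds ℝ (ℝ × ℝ) (0, 1)) := by
    refine tendsto_asymptoticNhds_of_dist_le (R := R + (R + 1)) fun t =>
      (dist_triangle _ (R + 1, t) _).trans (add_le_add (hfdist t) ?_)
    simp [Prod.dist_eq, abs_of_nonneg, hR₀, add_nonneg]
  have hfmem : ∀ᶠ t in atTop, f t ∈ Hset n ∩ translateSet p Λ := by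
    filter_upwards [eventually_ge_atTop (R + |n|)] with t ht
    have hone : ((1, |n|) : ℝ × ℝ) ∈ Hset n := 
      ⟨zero_le_one, abs_nonneg n, by simpa using le_abs_self n⟩
    obtain ⟨h₁, h₂⟩ := max_le_iff.1 (hfdist t)
    rw [Real.dist_eq, abs_le] at h₁ h₂
    refine ⟨?_, Set.mem_image_of_mem _ (hgΛ _)⟩
    rw [← add_sub_cancel (1, |n|) (f t)]
    exact add_mem_Hset hone (sub_nonneg.2 (by linarith)) (sub_nonneg.2 (by linarith))
  exact mem_asymptoticCone_iff.2 (hftendsto.frequently hfmem.frequently)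

theorem add_smul_up_mem_convexHull {Λ : AddSubgroup (ℝ × ℝ)} {p : ℝ × ℝ}
    (hp : p ∈ interior (convexHull ℝ (Hset n ∩ translateSet p Λ))) {s : ℝ} (hs : 0 ≤ s) :
    p + s • ((0, 1) : ℝ × ℝ) ∈ convexHull ℝ (Hset n ∩ translateSet p Λ) := by
  have hspan : Submodule.span ℝ (Λ : Set (ℝ × ℝ)) = ⊤ := span_eq_top_of_nonempty_interior
    ⟨p, interior_mono (convexHull_mono Set.inter_subset_right) hp⟩
  rw [add_comm]
  exact (convex_convexHull ℝ _).smul_vadd_mem_of_mem_nhds_of_mem_asymptoticCone hs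
    (mem_interior_iff_mem_nhds.1 hp)
    (asymptoticCone_mono (subset_convexHull ℝ _) (up_mem_asymptoticCone hspan p))

theorem eq_of_isExtreme_of_mem_vertical_line {Λ : AddSubgroup (ℝ × ℝ)} {p : ℝ × ℝ}
    (hp : p ∈ interior (convexHull ℝ (Hset n ∩ translateSet p Λ))) {e : Set (ℝ × ℝ)}
    (hface : IsExtreme ℝ (convexHull ℝ (Hset n ∩ translateSet p Λ)) e) (hpe : p ∉ e) {t : ℝ}
    (ht : 0 < t) (hb : (p.1, p.2 - t) ∈ e) {x : ℝ × ℝ} (hx : x ∈ e)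
    (hxline : x ∈ line[ℝ, p, (p.1, p.2 - t)]) : x = (p.1, p.2 - t) := by
  refine eq_of_isExtreme_of_mem_line hface hpe (fun s hs => ?_) hb hx hxline
  have hup : lineMap p (p.1, p.2 - t) s = p + (-s * t) • ((0, 1) : ℝ × ℝ) := by
    ext <;> simp [lineMap_apply, add_comm]
  rw [hup]
  exact add_smul_up_mem_convexHull hp (mul_nonneg (neg_nonneg.2 hs) ht.le)

end Hyperbola

section Ray

theorem mem_vertical_line_of_fst_eq {x p : ℝ × ℝ} (hx : x.1 = p.1) {t : ℝ} (ht : t ≠ 0) :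
    x ∈ line[ℝ, p, (p.1, p.2 - t)] := by
  have hlineMap : lineMap p (p.1, p.2 - t) ((p.2 - x.2) / t) = x := by
    ext <;> simp [lineMap_apply, hx, ht]
  exact hlineMap ▸ lineMap_mem_affineSpan_pair _ _ _

theorem exists_smul_mem_segment_of_slopeLE {u d : ℝ × ℝ} (hu : 0 < u.1) (hd : 0 < d.1)
    (hud : slopeLE u d) {t : ℝ} (ht : 0 < t) :
    ∃ τ : ℝ, 0 < τ ∧ τ • u ∈ segment ℝ ((0, -t) : ℝ × ℝ) d := by
  let β := u.1 / d.1
  let α := (β * d.2 - u.2) / t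
  have hβ : 0 < β := div_pos hu hd
  have hα : 0 ≤ α := by
    refine div_nonneg (sub_nonneg.2 ?_) ht.le
    rw [div_mul_eq_mul_div, le_div_iff₀ hd, mul_comm u.1]
    exact hud
  have hcomb : α • ((0, -t) : ℝ × ℝ) + β • d = u := by
    ext
    · simp [β, hd.ne']
    · simp [α, ht.ne']
  have hsum : 0 < α + β := add_pos_of_nonneg_of_pos hα hβ
  refine ⟨(α + β)⁻¹, inv_pos.2 hsum, (α + β)⁻¹ * α, (α + β)⁻¹ * β, by positivity, by positivity,
    ?_, ?_⟩
  · rw [← mul_add, inv_mul_cancel₀ hsum.ne']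
  · rw [mul_smul, mul_smul, ← smul_add, hcomb]

theorem exists_ray_mem_of_isExtreme {S e : Set (ℝ × ℝ)} {p u : ℝ × ℝ} {t : ℝ}
    (hface : IsExtreme ℝ (convexHull ℝ S) e) (hcol : Collinear ℝ e) (ht : 0 < t)
    (hb : (p.1, p.2 - t) ∈ e) (hvert : ∀ x ∈ e, x.1 = p.1 → x = (p.1, p.2 - t))
    (hu₁ : 0 ≤ u.1) (hu₂ : u.2 < 0)
    (hmin : ∀ s ∈ S, s ≠ p → p.1 ≤ s.1 → slopeLE u (s - p)) :
    ∃ τ : ℝ, 0 < τ ∧ p + τ • u ∈ e := by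
  rcases hu₁.eq_or_lt with hu₁ | hu₁
  · refine ⟨t / -u.2, div_pos ht (neg_pos.2 hu₂), ?_⟩
    convert hb using 1
    ext
    · simp [← hu₁]
    · simp [div_neg, hu₂.ne, sub_eq_add_neg]
  have hbS : (p.1, p.2 - t) ∉ S := fun hbS => by
    have hslope : u.2 * (p.1 - p.1) ≤ (p.2 - t - p.2) * u.1 :=
      hmin _ hbS (fun h => by simpa [ht.ne'] using congrArg Prod.snd h) le_rfl
    nlinarith [mul_pos ht hu₁]
  obtain ⟨s, ⟨hsS, hse⟩, hle, hseg⟩ := exists_segment_subset_of_isExtreme hface hcol hb hbS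
    (LinearMap.fst ℝ ℝ ℝ)
  have hps : p.1 < s.1 :=
    hle.lt_of_ne fun heq => hbS (hvert s hse heq.symm ▸ hsS)
  obtain ⟨τ, hτ, hmem⟩ := exists_smul_mem_segment_of_slopeLE hu₁ (d := s - p) (sub_pos.2 hps)
    (hmin s hsS (fun h => hps.ne (congrArg Prod.fst h).symm) hps.le) ht
  have hbp : (p.1, p.2 - t) = p + (0, -t) := by ext <;> simp [sub_eq_add_neg]
  rw [hbp, ← add_sub_cancel p s] at hseg
  exact ⟨τ, hτ, hseg ((mem_segment_translate ℝ p).2 hmem)⟩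

end Ray

theorem statement19_general {n : ℝ} {Λ : AddSubgroup (ℝ × ℝ)} {p ms : ℝ × ℝ} {e : Set (ℝ × ℝ)}
    {k : ℤ} (hpint : p ∈ interior (convexHull ℝ (Hset n ∩ translateSet p Λ)))
    (hface : IsExtreme ℝ (convexHull ℝ (Hset n ∩ translateSet p Λ)) e) (hcol : Collinear ℝ e)
    (hbelow : ∃ t : ℝ, 0 < t ∧ (p.1, p.2 - t) ∈ e) (hms : IsMinsl n Λ p ms)
    (hk : IsGreatest {j : ℤ | p + (j : ℝ) • ms ∈ Hset n} k) :
    Metric.infDist (p + (k : ℝ) • ms) (affineSpan ℝ e : Set (ℝ × ℝ)) <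
      1 / 2 * Metric.infDist p (affineSpan ℝ e : Set (ℝ × ℝ)) ∧
    ∃ c ∈ e, (p + (k : ℝ) • ms).1 ≤ c.1 := by
  obtain ⟨t, ht, hb⟩ := hbelow
  obtain ⟨hmsΛ, -, hms₁, hmsH, -, hmin⟩ := hms
  have hdim : 1 < Module.finrank ℝ (ℝ × ℝ) := by simp
  have he_interior {x : ℝ × ℝ} (hx : x ∈ e) :
      x ∉ interior (convexHull ℝ (Hset n ∩ translateSet p Λ)) :=
    notMem_interior_of_isExtreme_of_collinear hdim hface hcol hx
  have hpe : p ∉ e := fun hpe => he_interior hpe hpint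
  have hline : ∀ x ∈ e, x ∈ line[ℝ, p, (p.1, p.2 - t)] → x = (p.1, p.2 - t) :=
    fun x hx => eq_of_isExtreme_of_mem_vertical_line hpint hface hpe ht hb hx
  obtain ⟨τ, hτ, hc⟩ := exists_ray_mem_of_isExtreme hface hcol ht hb
    (fun x hx hx₁ => hline x hx (mem_vertical_line_of_fst_eq hx₁ ht.ne')) hms₁
    (snd_neg_of_isGreatest_add_smul_mem_Hset hk hms₁) (by
      rintro _ ⟨hsH, d, hd, rfl⟩ hsp hle
      rw [add_sub_cancel_left]
      exact hmin d hd (fun h => hsp (by simp [h])) (by simpa using hle) hsH)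
  have hpH : p ∈ Hset n := convexHull_inter_subset_Hset _ (interior_subset hpint)
  have hcH : p + τ • ms ∈ Hset n := convexHull_inter_subset_Hset _ (hface.subset hc)
  have hk₁ : (1 : ℝ) ≤ k := by exact_mod_cast hk.2 (show (1 : ℤ) ∈ _ by simpa using hmsH)
  have hτk : τ < k + 1 := lt_add_one_of_isGreatest_add_smul_mem (convex_Hset n) hpH hk hcH
  have hkΛ : (k : ℝ) • ms ∈ Λ := by
    rw [Int.cast_smul_eq_zsmul]
    exact Λ.zsmul_mem hmsΛ k
  have hkτ : k ≤ τ := le_of_add_smul_notMem_interior (convex_convexHull ℝ _) hpint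
    (subset_convexHull ℝ _ ⟨hk.1, _, hkΛ, rfl⟩) hτ (he_interior hc)
  have hp_span : p ∉ affineSpan ℝ e := notMem_affineSpan_of_collinear hcol hb
    (fun h => (sub_lt_self p.2 ht).ne' (congrArg Prod.snd h)) hline
  exact ⟨infDist_add_smul_lt_half (AffineSubspace.closed_of_finiteDimensional _) hp_span hk₁ hkτ
    hτk (mem_affineSpan ℝ hc), _, hc, by simpa using mul_le_mul_of_nonneg_right hkτ hms₁⟩

/-- Let `p ∈ H_n` lie in the interior of `C = conv(H_n ∩ (p+Λ))`, let `e` be the edge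
of `C` (a one-dimensional face) vertically below `p`, and let `v` be the right
endpoint of `e` (possibly `∞`, in which case the second conclusion is vacuous).  If
`q = Nextpt(p) ≠ ∞`, then the distance from `q` to the line spanned by `e` is less
than half the distance from `p` to that line, and `qₓ ≤ vₓ`. -/
theorem statement19 (n : ℝ) (hn : 0 < n) (v w : ℝ × ℝ)
    (hvrat : ratPoint v) (hwrat : ratPoint w)
    (hvw : v.1 * w.2 - v.2 * w.1 ≠ 0)
    (p : ℝ × ℝ) (hp : p ∈ Hset n)
    (hpint : p ∈ interior (convexHull ℝ (Hset n ∩ translateSet p (latticeOf v w))))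
    (e : Set (ℝ × ℝ))
    (hface : IsExtreme ℝ (convexHull ℝ (Hset n ∩ translateSet p (latticeOf v w))) e)
    (hdim : ∃ z u : ℝ × ℝ, u ≠ 0 ∧ e ⊆ {q | ∃ t : ℝ, q = z + t • u})
    (htwo : ∃ x₁ ∈ e, ∃ x₂ ∈ e, x₁ ≠ x₂)
    (hbelow : ∃ t : ℝ, 0 < t ∧ (p.1, p.2 - t) ∈ e)
    (ms : ℝ × ℝ) (hms : IsMinsl n (latticeOf v w) p ms)
    (kmax : ℤ)
    (hkmax : IsGreatest {j : ℤ | p + (j : ℝ) • ms ∈ Hset n} kmax)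
    (q : ℝ × ℝ) (hq : q = p + (kmax : ℝ) • ms) :
    Metric.infDist q (affineSpan ℝ e : Set (ℝ × ℝ)) <
      (1 / 2) * Metric.infDist p (affineSpan ℝ e : Set (ℝ × ℝ)) ∧
    ∀ vx : ℝ, IsGreatest {x : ℝ | ∃ y : ℝ, (x, y) ∈ e} vx → q.1 ≤ vx := by
  subst hq
  obtain ⟨z, u, -, he⟩ := hdim
  have hcol : Collinear ℝ e := (collinear_iff_exists_forall_eq_smul_vadd e).2
    ⟨z, u, fun x hx => (he hx).imp fun t ht => ht.trans (add_comm _ _)⟩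
  obtain ⟨hdist, c, hc, hqc⟩ := statement19_general (Λ := latticeSubgroup v w) hpint hface hcol
    hbelow hms hkmax
  exact ⟨hdist, fun vx hvx => hqc.trans (hvx.2 ⟨c.2, hc⟩)⟩

end
end
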